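/- (Regret-to-suboptimality conversion with approximate maximizers and noisy evaluations; core of the proof of Theorem 3.) Let K ≥ 1 and ε, ε_bp, ε_est ≥ 0. Let μ_1, …, μ_K ∈ P and λ_1, …, λ_K ∈ Λ_B satisfy L(μ, λ_k) ≤ L(μ_k, λ_k) + ε_bp for all μ ∈ P and all k. Let r̂_k, p̂_k ∈ ℝ be estimates with |r̂_k − R_c(μ_k)| ≤ ε_est/(2B) and |p̂_k − R_f(μ_k)| ≤ ε_est/(2B), and define the estimated Lagrangian L̂_k(λ) = R_o(μ_k) + λ^c·(r̂_k − ρ) + λ^f·(p̂_k − (1 − δ)). Suppose the average-regret bound (1/K)·Σ_{k=1}^K L̂_k(λ_k) ≤ inf_{λ ∈ Λ_B} (1/K)·Σ_{k=1}^K L̂_k(λ) + ε holds. Then the averaged policy μ̄ = (1/K)·Σ_{k=1}^K μ_k lies in P and, for every μ ∈ P, inf_{λ ∈ Λ_B} L(μ, λ) ≤ inf_{λ ∈ Λ_B} L(μ̄, λ) + ε + ε_bp + 2·ε_est. -/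

import Mathlib

/-!
Let `λ̄` and `μ̄` be the averages of the `λ_k` and the `μ_k`. If `L` is concave in the policy and
convex in the multiplier, and each `L̂_k` is within `η` of `L(μ_k, ·)`, then for every policy `ν`
and every multiplier `l`

`L(ν, λ̄) ≤ avg_k L(ν, λ_k) ≤ avg_k L(μ_k, λ_k) + ε_bp ≤ avg_k L̂_k(λ_k) + ε_bp + η`
`≤ avg_k L̂_k(l) + ε + ε_bp + η ≤ avg_k L(μ_k, l) + ε + ε_bp + 2η ≤ L(μ̄, l) + ε + ε_bp + 2η`,

where the outer steps are Jensen's inequality. The left side is at least `inf_λ L(ν, λ)`, and the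
infimum over `l` can be taken on the right. For the Lagrangian over `Λ_B`, errors of size
`ε_est / (2B)` in the two constraint values give `η = ε_est / 2`, since the multipliers have
`ℓ¹`-norm at most `B`.
-/

section WeightedAverage

variable {ι V W : Type*} [AddCommGroup V] [Module ℝ V] [AddCommGroup W] [Module ℝ W]
  {P : Set V} {Λ : Set W} {L : V → W → ℝ} {s : Finset ι} {w : ι → ℝ}
  {μ : ι → V} {lam : ι → W} {Lhat : ι → W → ℝ} {ε εbp η : ℝ}

lemma sum_mul_le_sum_mul_add {f g : ι → ℝ} {c : ℝ} (hw₀ : ∀ k ∈ s, 0 ≤ w k)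
    (hw₁ : ∑ k ∈ s, w k = 1) (h : ∀ k ∈ s, f k ≤ g k + c) :
    ∑ k ∈ s, w k * f k ≤ ∑ k ∈ s, w k * g k + c :=
  calc ∑ k ∈ s, w k * f k
      ≤ ∑ k ∈ s, w k * (g k + c) :=
        Finset.sum_le_sum fun k hk => mul_le_mul_of_nonneg_left (h k hk) (hw₀ k hk)
    _ = ∑ k ∈ s, w k * g k + c := by
        simp only [mul_add, Finset.sum_add_distrib, ← Finset.sum_mul, hw₁, one_mul]

lemma payoff_average_le_of_regret_le {ν : V} {l : W}
    (hconcave : ConcaveOn ℝ P fun ν => L ν l) (hconvex : ConvexOn ℝ Λ (L ν))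
    (hw₀ : ∀ k ∈ s, 0 ≤ w k) (hw₁ : ∑ k ∈ s, w k = 1)
    (hμP : ∀ k ∈ s, μ k ∈ P) (hlam : ∀ k ∈ s, lam k ∈ Λ)
    (hμopt : ∀ k ∈ s, L ν (lam k) ≤ L (μ k) (lam k) + εbp)
    (hplayed : ∀ k ∈ s, L (μ k) (lam k) ≤ Lhat k (lam k) + η)
    (hfixed : ∀ k ∈ s, Lhat k l ≤ L (μ k) l + η)
    (hregret : ∑ k ∈ s, w k * Lhat k (lam k) ≤ ∑ k ∈ s, w k * Lhat k l + ε) :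
    L ν (∑ k ∈ s, w k • lam k) ≤ L (∑ k ∈ s, w k • μ k) l + ε + εbp + 2 * η :=
  calc L ν (∑ k ∈ s, w k • lam k)
      ≤ ∑ k ∈ s, w k * L ν (lam k) := hconvex.map_sum_le hw₀ hw₁ hlam
    _ ≤ ∑ k ∈ s, w k * L (μ k) (lam k) + εbp := sum_mul_le_sum_mul_add hw₀ hw₁ hμopt
    _ ≤ ∑ k ∈ s, w k * Lhat k (lam k) + η + εbp := by
        gcongr
        exact sum_mul_le_sum_mul_add hw₀ hw₁ hplayed
    _ ≤ ∑ k ∈ s, w k * Lhat k l + ε + η + εbp := by gcongr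
    _ ≤ ∑ k ∈ s, w k * L (μ k) l + η + ε + η + εbp := by
        gcongr
        exact sum_mul_le_sum_mul_add hw₀ hw₁ hfixed
    _ ≤ L (∑ k ∈ s, w k • μ k) l + η + ε + η + εbp := by
        gcongr
        exact hconcave.le_map_sum hw₀ hw₁ hμP
    _ = L (∑ k ∈ s, w k • μ k) l + ε + εbp + 2 * η := by ring

lemma bddBelow_range_sum_mul {α : Type*} {f : ι → α → ℝ} (hw₀ : ∀ k ∈ s, 0 ≤ w k)
    (hf : ∀ k ∈ s, BddBelow (Set.range (f k))) :
    BddBelow (Set.range fun a => ∑ k ∈ s, w k * f k a) := by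
  choose! m hm using hf
  refine ⟨∑ k ∈ s, w k * m k, ?_⟩
  rintro _ ⟨a, rfl⟩
  exact Finset.sum_le_sum fun k hk =>
    mul_le_mul_of_nonneg_left (hm k hk ⟨a, rfl⟩) (hw₀ k hk)

lemma bddBelow_range_of_le_add {α : Type*} {f g : α → ℝ} {c : ℝ}
    (hf : BddBelow (Set.range f)) (h : ∀ a, f a ≤ g a + c) : BddBelow (Set.range g) := by
  obtain ⟨m, hm⟩ := hf
  refine ⟨m - c, ?_⟩
  rintro _ ⟨a, rfl⟩
  exact sub_le_iff_le_add.mpr ((hm ⟨a, rfl⟩).trans (h a))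

theorem regret_to_subopt_approx_general
    (hconcave : ∀ l ∈ Λ, ConcaveOn ℝ P fun ν => L ν l)
    (hconvex : ∀ ν ∈ P, ConvexOn ℝ Λ (L ν))
    (hbdd : ∀ ν ∈ P, BddBelow (Set.range fun l : Λ => L ν l))
    (hw₀ : ∀ k ∈ s, 0 ≤ w k) (hw₁ : ∑ k ∈ s, w k = 1)
    (hμP : ∀ k ∈ s, μ k ∈ P) (hlam : ∀ k ∈ s, lam k ∈ Λ)
    (hμopt : ∀ k ∈ s, ∀ ν ∈ P, L ν (lam k) ≤ L (μ k) (lam k) + εbp)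
    (hclose : ∀ k ∈ s, ∀ l ∈ Λ, |Lhat k l - L (μ k) l| ≤ η)
    (hregret : ∑ k ∈ s, w k * Lhat k (lam k) ≤ (⨅ l : Λ, ∑ k ∈ s, w k * Lhat k l) + ε) :
    ∑ k ∈ s, w k • μ k ∈ P ∧
    ∀ ν ∈ P, (⨅ l : Λ, L ν l) ≤ (⨅ l : Λ, L (∑ k ∈ s, w k • μ k) l) + ε + εbp + 2 * η := by
  obtain ⟨i, hi⟩ : s.Nonempty := Finset.nonempty_of_sum_ne_zero (hw₁.trans_ne one_ne_zero)
  have : Nonempty Λ := ⟨⟨lam i, hlam i hi⟩⟩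
  have hlower : ∀ k ∈ s, ∀ l ∈ Λ, L (μ k) l ≤ Lhat k l + η := fun k hk l hl => by
    linarith [(abs_le.mp (hclose k hk l hl)).1]
  have hupper : ∀ k ∈ s, ∀ l ∈ Λ, Lhat k l ≤ L (μ k) l + η := fun k hk l hl => by
    linarith [(abs_le.mp (hclose k hk l hl)).2]
  have hhat_bdd : BddBelow (Set.range fun l : Λ => ∑ k ∈ s, w k * Lhat k l) :=
    bddBelow_range_sum_mul hw₀ fun k hk =>
      bddBelow_range_of_le_add (hbdd (μ k) (hμP k hk)) fun l => hlower k hk l l.2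
  refine ⟨(hconcave _ (hlam i hi)).1.sum_mem hw₀ hw₁ hμP, fun ν hν => ?_⟩
  have hbound (l : Λ) : (⨅ l : Λ, L ν l) ≤ L (∑ k ∈ s, w k • μ k) l + ε + εbp + 2 * η :=
    (ciInf_le (hbdd ν hν) ⟨_, (hconvex ν hν).1.sum_mem hw₀ hw₁ hlam⟩).trans <|
      payoff_average_le_of_regret_le (hconcave l l.2) (hconvex ν hν) hw₀ hw₁ hμP hlam
        (fun k hk => hμopt k hk ν hν) (fun k hk => hlower k hk _ (hlam k hk))
        (fun k hk => hupper k hk l l.2)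
        (hregret.trans (add_le_add_left (ciInf_le hhat_bdd l) ε))
  have hinf : (⨅ l : Λ, L ν l) - (ε + εbp + 2 * η) ≤ ⨅ l : Λ, L (∑ k ∈ s, w k • μ k) l :=
    le_ciInf fun l => by linarith [hbound l]
  linarith

end WeightedAverage

/-- The set `Λ_B` of nonnegative multipliers `(λ^c, λ^f)` with `λ^c + λ^f ≤ B`. -/
def boundedMultipliers (B : ℝ) : Set (ℝ × ℝ) :=
  {l | 0 ≤ l.1 ∧ 0 ≤ l.2 ∧ l.1 + l.2 ≤ B}

/-- The Lagrangian as a function of the multiplier `l = (λ^c, λ^f)`, for a policy with objective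
reward `r` and constraint surpluses `c`, `f`. The surpluses may be the exact ones, `R_c(μ) − ρ` and
`R_f(μ) − (1 − δ)`, or the estimated ones, which gives `L̂_k`. -/
def lagrangian (r c f : ℝ) (l : ℝ × ℝ) : ℝ :=
  r + l.1 * c + l.2 * f

lemma convex_boundedMultipliers (B : ℝ) : Convex ℝ (boundedMultipliers B) :=
  (convex_halfSpace_ge (LinearMap.fst ℝ ℝ ℝ).isLinear 0).inter <|
    (convex_halfSpace_ge (LinearMap.snd ℝ ℝ ℝ).isLinear 0).inter <|
      convex_halfSpace_le (LinearMap.fst ℝ ℝ ℝ + LinearMap.snd ℝ ℝ ℝ).isLinear B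

lemma convexOn_lagrangian {Λ : Set (ℝ × ℝ)} (hΛ : Convex ℝ Λ) (r c f : ℝ) :
    ConvexOn ℝ Λ (lagrangian r c f) := by
  refine ⟨hΛ, fun x _ y _ a b _ _ hab => le_of_eq ?_⟩
  simp only [lagrangian, Prod.fst_add, Prod.snd_add, Prod.smul_fst, Prod.smul_snd, smul_eq_mul]
  linear_combination -r * hab

section Concave

variable {V : Type*} [AddCommGroup V] [Module ℝ V] {P : Set V}

lemma concaveOn_affineMap (hP : Convex ℝ P) (g : V →ᵃ[ℝ] ℝ) : ConcaveOn ℝ P g :=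
  ((concaveOn_id convex_univ).comp_affineMap g).subset (Set.subset_univ P) hP

lemma concaveOn_lagrangian {r c f : V → ℝ} (hr : ConcaveOn ℝ P r) (hc : ConcaveOn ℝ P c)
    (hf : ConcaveOn ℝ P f) {l : ℝ × ℝ} (hl₁ : 0 ≤ l.1) (hl₂ : 0 ≤ l.2) :
    ConcaveOn ℝ P fun ν => lagrangian (r ν) (c ν) (f ν) l :=
  (hr.add (hc.smul hl₁)).add (hf.smul hl₂)

end Concave

lemma abs_lagrangian_sub_lagrangian_le {B η r c c' f f' : ℝ} {l : ℝ × ℝ}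
    (hl : l ∈ boundedMultipliers B) (hc : |c - c'| ≤ η) (hf : |f - f'| ≤ η) :
    |lagrangian r c f l - lagrangian r c' f' l| ≤ B * η := by
  obtain ⟨hl₁, hl₂, hlB⟩ := hl
  have hη : 0 ≤ η := (abs_nonneg _).trans hc
  calc |lagrangian r c f l - lagrangian r c' f' l|
      = |l.1 * (c - c') + l.2 * (f - f')| := by
        unfold lagrangian
        ring_nf
    _ ≤ l.1 * |c - c'| + l.2 * |f - f'| := by
        simpa only [abs_mul, abs_of_nonneg hl₁, abs_of_nonneg hl₂]
          using abs_add_le (l.1 * (c - c')) (l.2 * (f - f'))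
    _ ≤ l.1 * η + l.2 * η := by gcongr
    _ = (l.1 + l.2) * η := (add_mul _ _ _).symm
    _ ≤ B * η := by gcongr

lemma bddBelow_range_lagrangian (B r c f : ℝ) :
    BddBelow (Set.range fun l : boundedMultipliers B => lagrangian r c f l) := by
  refine ⟨r - B * max |c| |f|, ?_⟩
  rintro _ ⟨l, rfl⟩
  have hdist : |lagrangian r c f l - lagrangian r 0 0 l| ≤ B * max |c| |f| :=
    abs_lagrangian_sub_lagrangian_le l.2 (by simp) (by simp)
  have hzero : lagrangian r 0 0 l = r := by simp [lagrangian]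
  linarith [(abs_le.mp hdist).1]

/-- **Regret-to-suboptimality conversion with approximate maximizers and noisy
evaluations** (core of the proof of Theorem 3).  If each `μ_k` is an `ε_bp`-approximate
maximizer of `L(·, λ_k)` over `P`, the estimates `r̂_k, p̂_k` are within `ε_est/(2B)` of
the true constraint rewards, and the iterates satisfy the average-regret bound `ε` for
the estimated Lagrangians `L̂_k` over `Λ_B`, then the averaged policy `μ̄ = (1/K) ∑ μ_k`
lies in `P` and is `(ε + ε_bp + 2 ε_est)`-optimal for the bounded sup-inf problem. -/
theorem regret_to_subopt_approx
    {V : Type*} [AddCommGroup V] [Module ℝ V]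
    (P : Set V) (hPne : P.Nonempty) (hPconv : Convex ℝ P)
    (Ro Rc Rf : V →ᵃ[ℝ] ℝ)
    (ρ δ B : ℝ) (hB : 0 < B)
    (L : V → ℝ × ℝ → ℝ)
    (hL : ∀ μ lam, L μ lam = Ro μ + lam.1 * (Rc μ - ρ) + lam.2 * (Rf μ - (1 - δ)))
    (ΛB : Set (ℝ × ℝ))
    (hΛB : ΛB = {lam : ℝ × ℝ | 0 ≤ lam.1 ∧ 0 ≤ lam.2 ∧ lam.1 + lam.2 ≤ B})
    (K : ℕ) (hK : 1 ≤ K) (ε εbp εest : ℝ)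
    (hε : 0 ≤ ε) (hεbp : 0 ≤ εbp) (hεest : 0 ≤ εest)
    (μ : ℕ → V) (lam : ℕ → ℝ × ℝ) (rhat phat : ℕ → ℝ)
    (hμP : ∀ k ∈ Finset.Icc 1 K, μ k ∈ P)
    (hlamB : ∀ k ∈ Finset.Icc 1 K, lam k ∈ ΛB)
    (hμopt : ∀ k ∈ Finset.Icc 1 K, ∀ ν ∈ P, L ν (lam k) ≤ L (μ k) (lam k) + εbp)
    (hrhat : ∀ k ∈ Finset.Icc 1 K, |rhat k - Rc (μ k)| ≤ εest / (2 * B))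
    (hphat : ∀ k ∈ Finset.Icc 1 K, |phat k - Rf (μ k)| ≤ εest / (2 * B))
    -- the estimated Lagrangian `L̂_k(λ) = R_o(μ_k) + λ^c (r̂_k − ρ) + λ^f (p̂_k − (1 − δ))`
    (Lhat : ℕ → ℝ × ℝ → ℝ)
    (hLhat : ∀ k l, Lhat k l = Ro (μ k) + l.1 * (rhat k - ρ) + l.2 * (phat k - (1 - δ)))
    (hregret : (K : ℝ)⁻¹ * ∑ k ∈ Finset.Icc 1 K, Lhat k (lam k) ≤
        (⨅ l : ΛB, (K : ℝ)⁻¹ * ∑ k ∈ Finset.Icc 1 K, Lhat k (l : ℝ × ℝ)) + ε)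
    (μbar : V) (hμbar : μbar = (K : ℝ)⁻¹ • ∑ k ∈ Finset.Icc 1 K, μ k) :
    μbar ∈ P ∧
    ∀ ν ∈ P, (⨅ l : ΛB, L ν (l : ℝ × ℝ)) ≤
      (⨅ l : ΛB, L μbar (l : ℝ × ℝ)) + ε + εbp + 2 * εest := by
  obtain rfl : L = fun ν => lagrangian (Ro ν) (Rc ν - ρ) (Rf ν - (1 - δ)) := funext₂ hL
  obtain rfl : Lhat = fun k => lagrangian (Ro (μ k)) (rhat k - ρ) (phat k - (1 - δ)) :=
    funext₂ hLhat
  obtain rfl : ΛB = boundedMultipliers B := hΛB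
  subst hμbar
  rw [Finset.smul_sum]
  simp only [Finset.mul_sum] at hregret
  have hweights : ∑ _k ∈ Finset.Icc 1 K, (K : ℝ)⁻¹ = 1 := by simp [Nat.ne_zero_of_lt hK]
  have hconcave : ∀ l ∈ boundedMultipliers B,
      ConcaveOn ℝ P fun ν => lagrangian (Ro ν) (Rc ν - ρ) (Rf ν - (1 - δ)) l := fun l hl =>
    concaveOn_lagrangian (concaveOn_affineMap hPconv Ro)
      (concaveOn_affineMap hPconv (Rc - AffineMap.const ℝ V ρ))
      (concaveOn_affineMap hPconv (Rf - AffineMap.const ℝ V (1 - δ))) hl.1 hl.2.1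
  obtain ⟨hmem, hsubopt⟩ := regret_to_subopt_approx_general hconcave
    (fun _ _ => convexOn_lagrangian (convex_boundedMultipliers B) _ _ _)
    (fun _ _ => bddBelow_range_lagrangian B _ _ _) (fun _ _ => by positivity) hweights
    hμP hlamB hμopt
    (fun k hk l hl => abs_lagrangian_sub_lagrangian_le hl
      (by simpa only [sub_sub_sub_cancel_right] using hrhat k hk)
      (by simpa only [sub_sub_sub_cancel_right] using hphat k hk)) hregret
  have hη : 2 * (B * (εest / (2 * B))) = εest := by field_simp
  exact ⟨hmem, fun ν hν => by linarith [hsubopt ν hν]⟩
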